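/- There are exactly 2^(2^(n-1) - n) binary de Bruijn sequences of order n (counted up to cyclic shift, i.e., as cyclic sequences of period 2^n in which every binary n-tuple occurs exactly once). -/

import Mathlib

/-!
De Bruijn sequences of order `m + 1`, up to shift, correspond to the functions `g` of `m` bits for
which the shift register `v ↦ (v 1, …, v m, v 0 + g (v 1, …, v m))`, a permutation `π_g` of the
`N = 2 ^ (m + 1)` states, is a single cycle. These `g` are counted by a determinant.

For a permutation matrix `P` and a state `x`, the determinant of `1 - P + 𝟙 eₓᵀ` is `N` if `P` is
a single cycle and `0` otherwise (`det_cycleMatrix_of_isCycleOn`, `det_cycleMatrix_of_not`). The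
matrices belonging to the various `g` differ only by independent swaps of pairs of rows: the bit
`g w` decides which of `w0`, `w1` is the successor of `0w`, the other one being the successor of
`1w`. Since `(a - p) ∧ (b - q) + (a - q) ∧ (b - p) = 2 (a - r) ∧ (b - r)` with `r = (p + q) / 2`,
the average of the determinants over all `g` is the determinant of the averaged matrix
(`sum_det_swap`), namely of `1 - (M - 𝟙 eₓᵀ)`, where `M` is the transition matrix of the random
walk on the de Bruijn graph. A step of this walk forgets one coordinate of the state, so
`M - 𝟙 eₓᵀ` is nilpotent and this determinant is `1` (`det_one_sub_walkMatrix`). Hence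
`N` times the number of single-cycle registers is the number `2 ^ 2 ^ m` of all functions `g`.
-/

/-- `s : ZMod (2^n) → ZMod 2` is a de Bruijn sequence of order `n`:
a cyclic sequence of period `2^n` in which every binary `n`-tuple occurs
exactly once (equivalently, the `2^n` cyclic windows of length `n` are distinct). -/
def IsDeBruijn (n : ℕ) (s : ZMod (2^n) → ZMod 2) : Prop :=
  Function.Injective (fun i : ZMod (2^n) => fun j : Fin n => s (i + (j : ℕ)))

/-- Cyclic-shift equivalence of de Bruijn sequences. -/
def shiftRel (n : ℕ) (s t : {s : ZMod (2^n) → ZMod 2 // IsDeBruijn n s}) : Prop :=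
  ∃ k : ZMod (2^n), ∀ i, t.1 i = s.1 (i + k)

/-! ### A determinant detecting single cycles -/

/-- The matrix `1 - P + 𝟙 eₓᵀ`, where `P` is the permutation matrix of `π` and `𝟙` is the all-ones
column: its determinant detects whether `π` is a single cycle. -/
def cycleMatrix {X : Type*} [DecidableEq X] (π : Equiv.Perm X) (x : X) : Matrix X X ℚ :=
  Matrix.of fun v => Pi.single v 1 - Pi.single (π v) 1 + Pi.single x 1

theorem cycleMatrix_mulVec {X : Type*} [Fintype X] [DecidableEq X] (π : Equiv.Perm X) (x : X)
    (f : X → ℚ) (v : X) : (cycleMatrix π x).mulVec f v = f v - f (π v) + f x := by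
  change (Pi.single v 1 - Pi.single (π v) 1 + Pi.single x 1) ⬝ᵥ f = _
  rw [add_dotProduct, sub_dotProduct]
  simp

/-- If `π` is not a single cycle, some cycle misses `x` and `cycleMatrix π x` is singular. -/
theorem det_cycleMatrix_of_not {X : Type*} [Fintype X] [DecidableEq X] (π : Equiv.Perm X) (x : X)
    (h : ¬ π.IsCycleOn ((Finset.univ : Finset X) : Set X)) : (cycleMatrix π x).det = 0 := by
  classical
  -- The indicator of the complement of the cycle through `x` lies in the kernel.
  rw [← Matrix.exists_mulVec_eq_zero_iff]
  refine ⟨fun y => if π.SameCycle x y then 0 else 1, ?_, ?_⟩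
  · intro h0
    apply h
    have hx : ∀ y, π.SameCycle x y := by
      intro y
      have := congrFun h0 y
      by_contra hy
      simp [hy] at this
    refine ⟨by simp, fun a _ b _ => (hx a).symm.trans (hx b)⟩
  · funext v
    rw [cycleMatrix_mulVec]
    simp [Equiv.Perm.sameCycle_apply_right, Equiv.Perm.SameCycle.refl]

theorem det_cycleMatrix_of_isCycleOn {X : Type*} [Fintype X] [DecidableEq X] (π : Equiv.Perm X)
    (x : X) (h : π.IsCycleOn ((Finset.univ : Finset X) : Set X)) :
    (cycleMatrix π x).det = Fintype.card X := by
  set N := Fintype.card X with hN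
  -- Replacing row `x` by the sum of all rows, which is `N • eₓ`, keeps the determinant.
  have hsum : (cycleMatrix π x).det
      = ((cycleMatrix π x).updateRow x ((N : ℚ) • Pi.single x 1)).det := by
    have h1 := Matrix.det_updateRow_sum (cycleMatrix π x) x (fun _ => 1)
    rw [one_smul] at h1
    rw [← h1]
    congr 2
    have h2 : ∑ v, (Pi.single (π v) 1 : X → ℚ) = ∑ v, (Pi.single v 1 : X → ℚ) :=
      Equiv.sum_comp π (fun v => (Pi.single v 1 : X → ℚ))
    have h3 : ∀ v, cycleMatrix π x v = Pi.single v 1 - Pi.single (π v) 1 + Pi.single x 1 :=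
      fun _ => rfl
    simp only [h3, one_smul, Finset.sum_add_distrib, Finset.sum_sub_distrib, h2]
    rw [sub_self, zero_add, Finset.sum_const, Finset.card_univ, ← Nat.cast_smul_eq_nsmul ℚ]
  -- Listing the states along the cycle, with `x` last, makes the new matrix upper triangular.
  let e0 : Fin N → X := fun k => (π ^ (k.val + 1)) x
  have hmod : ∀ a b : ℕ, (π ^ a) x = (π ^ b) x ↔ a ≡ b [MOD N] := fun a b =>
    h.pow_apply_eq_pow_apply (Finset.mem_univ x)
  have hinj : Function.Injective e0 := by
    intro a b hab
    have h1 := Nat.ModEq.add_right_cancel' 1 ((hmod _ _).1 hab)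
    exact Fin.ext (Nat.ModEq.eq_of_lt_of_lt h1 a.2 b.2)
  let e : Fin N ≃ X := Equiv.ofBijective e0
    ((Fintype.bijective_iff_injective_and_card e0).2 ⟨hinj, by simp [hN]⟩)
  have hex : ∀ k : Fin N, e k = x ↔ k.val + 1 = N := by
    intro k
    have h1 : e k = x ↔ k.val + 1 ≡ 0 [MOD N] := hmod _ 0
    rw [h1, Nat.modEq_zero_iff_dvd]
    constructor
    · intro h2
      have := Nat.le_of_dvd (by omega) h2
      omega
    · intro h2; rw [h2]
  have hne : ∀ i j : Fin N, j < i → π (e i) = e j → i.val + 1 = N := by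
    intro i j hij hpi
    have h1 : (π ^ (i.val + 1 + 1)) x = (π ^ (j.val + 1)) x := by
      rw [pow_succ' π (i.val + 1), Equiv.Perm.mul_apply]; exact hpi
    have h2 := Nat.ModEq.add_right_cancel' 1 ((hmod _ _).1 h1)
    by_contra h3
    have := Nat.ModEq.eq_of_lt_of_lt h2 (by omega) j.2
    have : j.val < i.val := hij
    omega
  have hNpos : 0 < N := Fintype.card_pos_iff.2 ⟨x⟩
  rw [hsum, ← Matrix.det_submatrix_equiv_self e, Matrix.det_of_isUpperTriangular]
  · have hdiag : ∀ i : Fin N, ((cycleMatrix π x).updateRow x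
        ((N : ℚ) • Pi.single x 1)).submatrix e e i i = if i.val + 1 = N then (N : ℚ) else 1 := by
      intro i
      rw [Matrix.submatrix_apply, Matrix.updateRow_apply]
      by_cases hi : e i = x
      · simp [hi, (hex i).1 hi]
      · have h1 : ¬ (i.val + 1 = N) := fun h => hi ((hex i).2 h)
        have h2 : e i ≠ π (e i) := by
          intro h2
          have h3 : (π ^ (i.val + 1 + 1)) x = (π ^ (i.val + 1)) x := by
            rw [pow_succ' π (i.val + 1), Equiv.Perm.mul_apply]; exact h2.symm
          have h4 := Nat.ModEq.add_right_cancel' 1 ((hmod _ _).1 h3)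
          have := Nat.ModEq.eq_of_lt_of_lt h4 (by omega) i.2
          omega
        simp [hi, h1, cycleMatrix, h2]
    rw [Finset.prod_congr rfl fun i _ => hdiag i]
    rw [Finset.prod_eq_single ⟨N - 1, by omega⟩]
    · simp; omega
    · intro b _ hb
      rw [if_neg]
      intro hb'
      apply hb
      apply Fin.ext
      simp; omega
    · simp
  · intro i j hij
    have hij' : j < i := hij
    rw [Matrix.submatrix_apply, Matrix.updateRow_apply]
    have hjx : e j ≠ x := by
      intro h1
      have := (hex j).1 h1
      have : j.val < i.val := hij'
      omega
    by_cases hi : e i = x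
    · simp [hi, hjx]
    · have h1 : e j ≠ π (e i) := fun h1 => hi ((hex i).2 (hne i j hij' h1.symm))
      have h2 : e j ≠ e i := fun h2 => hij'.ne (e.injective h2)
      simp only [hi, if_false, cycleMatrix, Matrix.of_apply, Pi.add_apply, Pi.sub_apply,
        Pi.single_apply, h1, h2, hjx]
      norm_num

/-! ### Summing over all shift registers -/

/-- Summing a determinant over independent swaps of pairs of rows. Each pair of rows is
`c w b, d w - c w b`; adding the first to the second leaves only the first dependent on the
choice `b`, so that multilinearity replaces every choice by its average. -/
theorem sum_det_swap {W : Type*} [Fintype W] [DecidableEq W]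
    (c : W → ZMod 2 → (W ⊕ W → ℚ)) (d : W → (W ⊕ W → ℚ)) :
    ∑ g : W → ZMod 2, (Matrix.fromRows (Matrix.of fun w => c w (g w))
      (Matrix.of fun w => d w - c w (g w))).det
    = 2 ^ Fintype.card W * (Matrix.fromRows (Matrix.of fun w => (2⁻¹ : ℚ) • (c w 0 + c w 1))
      (Matrix.of fun w => d w - (2⁻¹ : ℚ) • (c w 0 + c w 1))).det := by
  let F := (Matrix.detRowAlternating (n := W ⊕ W) (R := ℚ)).toMultilinearMap.currySum
  have key : ∀ C : W → (W ⊕ W → ℚ),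
      (Matrix.fromRows (Matrix.of C) (Matrix.of fun w => d w - C w)).det = F C d := by
    intro C
    have h1 : F C d = (Matrix.fromRows (Matrix.of C) (Matrix.of d)).det := by
      simp only [F, MultilinearMap.currySum_apply]
      change Matrix.det _ = _
      congr 1
    have h2 : Matrix.fromRows (Matrix.of C) (Matrix.of d)
        = Matrix.fromBlocks 1 0 1 1 * Matrix.fromRows (Matrix.of C)
          (Matrix.of fun w => d w - C w) := by
      rw [Matrix.fromBlocks_mul_fromRows]
      congr 1
      · simp
      · ext i j; simp
    rw [h1, h2, Matrix.det_mul, Matrix.det_fromBlocks_zero₁₂]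
    simp
  simp only [key]
  have h3 := MultilinearMap.map_sum F c
  have h4 := congrArg (fun f => f d) h3
  simp only [sum_apply] at h4
  rw [← h4]
  have h5 : (fun i => ∑ j, c i j) = fun i => (2 : ℚ) • ((2⁻¹ : ℚ) • (c i 0 + c i 1)) := by
    funext i
    rw [smul_smul]
    norm_num
    exact Fin.sum_univ_two (c i)
  rw [h5, MultilinearMap.map_smul_univ]
  simp

/-- The shift register `(v 0, …, v m) ↦ (v 1, …, v m, v 0 + g (v 1, …, v m))`, a permutation of
the states for every choice of `g`. -/
def shiftStep {m : ℕ} (g : (Fin m → ZMod 2) → ZMod 2) : Equiv.Perm (Fin (m + 1) → ZMod 2) where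
  toFun v := Fin.snoc (α := fun _ => ZMod 2) (Fin.tail v) (v 0 + g (Fin.tail v))
  invFun u := Fin.cons (α := fun _ => ZMod 2) (u (Fin.last m) - g (Fin.init u)) (Fin.init u)
  left_inv v := by simp
  right_inv u := by simp

/-- The state space as the disjoint union of its two halves: `inl w ↦ 0w`, `inr w ↦ 1w`. -/
def halvesEquiv (m : ℕ) :
    (Fin m → ZMod 2) ⊕ (Fin m → ZMod 2) ≃ (Fin (m + 1) → ZMod 2) where
  toFun := Sum.elim (Fin.cons (α := fun _ => ZMod 2) 0) (Fin.cons (α := fun _ => ZMod 2) 1)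
  invFun v := if v 0 = 0 then Sum.inl (Fin.tail v) else Sum.inr (Fin.tail v)
  left_inv w := by cases w <;> simp
  right_inv v := by
    have h2 : ∀ a : ZMod 2, a ≠ 0 → 1 = a := by decide
    by_cases h : v 0 = 0
    · simp only [h, if_true, Sum.elim_inl]
      rw [← h]; exact Fin.cons_self_tail v
    · simp only [h, if_false, Sum.elim_inr]
      rw [h2 _ h]; exact Fin.cons_self_tail v

/-- `M - 𝟙 e₀ᵀ`, where `M` is the transition matrix of the random walk on the de Bruijn graph. -/
def walkMatrix (m : ℕ) : Matrix (Fin (m + 1) → ZMod 2) (Fin (m + 1) → ZMod 2) ℚ :=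
  Matrix.of fun v => (2⁻¹ : ℚ) •
    (Pi.single (Fin.snoc (α := fun _ => ZMod 2) (Fin.tail v) 0) 1 +
     Pi.single (Fin.snoc (α := fun _ => ZMod 2) (Fin.tail v) 1) 1) - Pi.single 0 1

theorem walkMatrix_mulVec (m : ℕ) (f : (Fin (m + 1) → ZMod 2) → ℚ) (v : Fin (m + 1) → ZMod 2) :
    (walkMatrix m).mulVec f v = 2⁻¹ * (f (Fin.snoc (α := fun _ => ZMod 2) (Fin.tail v) 0) +
      f (Fin.snoc (α := fun _ => ZMod 2) (Fin.tail v) 1)) - f 0 := by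
  change ((2⁻¹ : ℚ) • (Pi.single (Fin.snoc (α := fun _ => ZMod 2) (Fin.tail v) 0) 1 +
     Pi.single (Fin.snoc (α := fun _ => ZMod 2) (Fin.tail v) 1) 1) - Pi.single 0 1) ⬝ᵥ f = _
  rw [sub_dotProduct, smul_dotProduct, add_dotProduct]
  simp

/-- Each application of `walkMatrix m` forgets one more coordinate of the state. -/
theorem walkMatrix_pow_mulVec_congr (m k : ℕ) (f : (Fin (m + 1) → ZMod 2) → ℚ)
    (v v' : Fin (m + 1) → ZMod 2) (h : ∀ j : Fin (m + 1), k ≤ j.val → v j = v' j) :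
    ((walkMatrix m) ^ k).mulVec f v = ((walkMatrix m) ^ k).mulVec f v' := by
  induction k generalizing v v' with
  | zero =>
    have : v = v' := funext fun j => h j (Nat.zero_le _)
    rw [this]
  | succ k ih =>
    have hb : ∀ b : ZMod 2, ((walkMatrix m) ^ k).mulVec f
        (Fin.snoc (α := fun _ => ZMod 2) (Fin.tail v) b) = ((walkMatrix m) ^ k).mulVec f
        (Fin.snoc (α := fun _ => ZMod 2) (Fin.tail v') b) := by
      intro b
      apply ih
      intro j
      refine Fin.lastCases ?_ (fun i => ?_) j
      · simp
      · intro hj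
        simp only [Fin.snoc_castSucc, Fin.tail]
        apply h
        simpa using hj
    rw [pow_succ', ← Matrix.mulVec_mulVec, walkMatrix_mulVec, walkMatrix_mulVec, hb, hb]

theorem det_one_sub_walkMatrix (m : ℕ) : (1 - walkMatrix m).det = 1 := by
  have hnil : IsNilpotent (walkMatrix m) := by
    refine ⟨m + 1 + 1, ?_⟩
    -- After `m + 1` steps a function has become constant, and constants are killed.
    apply Matrix.ext_of_mulVec_single
    intro i
    funext v
    rw [pow_succ', ← Matrix.mulVec_mulVec, walkMatrix_mulVec]
    have hc : ∀ u, ((walkMatrix m) ^ (m + 1)).mulVec (Pi.single i 1) u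
        = ((walkMatrix m) ^ (m + 1)).mulVec (Pi.single i 1) 0 := fun u =>
      walkMatrix_pow_mulVec_congr m (m + 1) _ u 0 (fun j hj => absurd j.2 (by omega))
    rw [hc (Fin.snoc _ _), hc (Fin.snoc _ 1)]
    simp
    ring
  have h1 := (Matrix.isNilpotent_charpoly_sub_pow_of_isNilpotent hnil).eq_zero
  have h2 := Matrix.eval_charpoly (walkMatrix m) 1
  rw [sub_eq_zero.1 h1] at h2
  simpa using h2.symm

/-- The states `0w` and `1w` have the successors `w0` and `w1`, and `g w` decides which gets which;
hence `sum_det_swap` turns the sum into a multiple of the determinant of the average of the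
matrices `cycleMatrix (shiftStep g) 0`, which is `1 - walkMatrix m`. -/
theorem sum_det_cycleMatrix (m : ℕ) :
    ∑ g : (Fin m → ZMod 2) → ZMod 2, (cycleMatrix (shiftStep g) 0).det = 2 ^ 2 ^ m := by
  let c : (Fin m → ZMod 2) → ZMod 2 → ((Fin m → ZMod 2) ⊕ (Fin m → ZMod 2) → ℚ) :=
    fun w b => (Pi.single (Fin.cons (α := fun _ => ZMod 2) 0 w) 1
      - Pi.single (Fin.snoc (α := fun _ => ZMod 2) w b) 1 + Pi.single 0 1) ∘ halvesEquiv m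
  let d : (Fin m → ZMod 2) → ((Fin m → ZMod 2) ⊕ (Fin m → ZMod 2) → ℚ) :=
    fun w => (Pi.single (Fin.cons (α := fun _ => ZMod 2) 0 w) 1
      + Pi.single (Fin.cons (α := fun _ => ZMod 2) 1 w) 1
      - Pi.single (Fin.snoc (α := fun _ => ZMod 2) w 0) 1
      - Pi.single (Fin.snoc (α := fun _ => ZMod 2) w 1) 1
      + (Pi.single 0 1 + Pi.single 0 1)) ∘ halvesEquiv m
  have h := sum_det_swap c d
  have hcard : Fintype.card (Fin m → ZMod 2) = 2 ^ m := by simp [ZMod.card]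
  have hL : ∀ g : (Fin m → ZMod 2) → ZMod 2, (cycleMatrix (shiftStep g) 0).det =
      (Matrix.fromRows (Matrix.of fun w => c w (g w))
      (Matrix.of fun w => d w - c w (g w))).det := by
    intro g
    rw [← Matrix.det_submatrix_equiv_self (halvesEquiv m)]
    congr 1
    ext i j
    rcases i with w | w
    · simp [c, cycleMatrix, shiftStep, halvesEquiv]
    · have h01 : ∀ b : ZMod 2, b = 0 ∨ b = 1 := by decide
      have h11 : (1 + 1 : ZMod 2) = 0 := by decide
      rcases h01 (g w) with hg | hg
      · simp [c, d, cycleMatrix, shiftStep, halvesEquiv, hg]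
        ring
      · simp [c, d, cycleMatrix, shiftStep, halvesEquiv, hg, h11]
        ring
  have hR : (1 - walkMatrix m).det =
      (Matrix.fromRows (Matrix.of fun w => (2⁻¹ : ℚ) • (c w 0 + c w 1))
      (Matrix.of fun w => d w - (2⁻¹ : ℚ) • (c w 0 + c w 1))).det := by
    rw [← Matrix.det_submatrix_equiv_self (halvesEquiv m)]
    congr 1
    ext i j
    rcases i with w | w
    · simp [c, walkMatrix, halvesEquiv, Matrix.one_eq_pi_single]
      ring
    · simp [c, d, walkMatrix, halvesEquiv, Matrix.one_eq_pi_single]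
      ring
  rw [Finset.sum_congr rfl fun g _ => hL g, h, ← hR, det_one_sub_walkMatrix, hcard, mul_one]

/-- The number of shift registers `shiftStep g` consisting of one cycle. -/
theorem card_isCycleOn_shiftStep (m : ℕ) :
    Nat.card {g : (Fin m → ZMod 2) → ZMod 2 //
      (shiftStep g).IsCycleOn ((Finset.univ : Finset (Fin (m + 1) → ZMod 2)) : Set _)}
    = 2 ^ (2 ^ m - (m + 1)) := by
  classical
  have h := sum_det_cycleMatrix m
  have hterm : ∀ g : (Fin m → ZMod 2) → ZMod 2, (cycleMatrix (shiftStep g) 0).det =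
      if (shiftStep g).IsCycleOn ((Finset.univ : Finset (Fin (m + 1) → ZMod 2)) : Set _)
      then (2 : ℚ) ^ (m + 1) else 0 := by
    intro g
    split_ifs with hg
    · rw [det_cycleMatrix_of_isCycleOn _ _ hg]; simp [ZMod.card]
    · exact det_cycleMatrix_of_not _ _ hg
  rw [Finset.sum_congr rfl fun g _ => hterm g, ← Finset.sum_filter, Finset.sum_const,
    nsmul_eq_mul] at h
  rw [Nat.card_eq_fintype_card, Fintype.card_subtype]
  have hle : m + 1 ≤ 2 ^ m := Nat.lt_two_pow_self
  apply Nat.eq_of_mul_eq_mul_right (show 0 < 2 ^ (m + 1) by positivity)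
  rw [← pow_add, Nat.sub_add_cancel hle]
  exact_mod_cast h

/-! ### Sequences and shift registers -/

/-- The window of length `m + 1` of `s` starting at position `i`. -/
def window (m : ℕ) (s : ZMod (2 ^ (m + 1)) → ZMod 2) (i : ZMod (2 ^ (m + 1))) :
    Fin (m + 1) → ZMod 2 := fun j => s (i + (j : ℕ))

theorem window_bijective {m : ℕ} {s : ZMod (2 ^ (m + 1)) → ZMod 2} (hs : IsDeBruijn (m + 1) s) :
    Function.Bijective (window m s) :=
  (Fintype.bijective_iff_injective_and_card _).2 ⟨hs, by simp [ZMod.card]⟩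

theorem init_window_succ {m : ℕ} (s : ZMod (2 ^ (m + 1)) → ZMod 2) (i : ZMod (2 ^ (m + 1))) :
    Fin.init (window m s (i + 1)) = Fin.tail (window m s i) := by
  funext j
  simp only [Fin.init, Fin.tail, window]
  congr 1
  simp
  ring

/-- `s` is an output sequence of the shift register `shiftStep g`: each window is the successor
of the previous one. -/
def Generates {m : ℕ} (g : (Fin m → ZMod 2) → ZMod 2) (s : ZMod (2 ^ (m + 1)) → ZMod 2) : Prop :=
  ∀ i, window m s (i + 1) = shiftStep g (window m s i)

/-- The last entries of the successors of `0w` and `1w` differ, since the windows of `s` are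
distinct; this is why the feedback has the form `v 0 + g (v 1, …, v m)`. -/
theorem exists_generates {m : ℕ} {s : ZMod (2 ^ (m + 1)) → ZMod 2} (hs : IsDeBruijn (m + 1) s) :
    ∃ g, Generates g s := by
  have hb := window_bijective hs
  let E := Equiv.ofBijective _ hb
  have hE : ∀ v, window m s (E.symm v) = v := fun v => E.apply_symm_apply v
  refine ⟨fun w => window m s (E.symm (Fin.cons (α := fun _ => ZMod 2) 0 w) + 1) (Fin.last m), ?_⟩
  intro i
  set v := window m s i with hv
  rw [← Fin.snoc_init_self (window m s (i + 1)), init_window_succ, ← hv]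
  simp only [shiftStep, Equiv.coe_fn_mk]
  congr 1
  set i0 := E.symm (Fin.cons (α := fun _ => ZMod 2) 0 (Fin.tail v)) with hi0
  have hw0 : window m s i0 = Fin.cons (α := fun _ => ZMod 2) 0 (Fin.tail v) := hE _
  have h01 : ∀ b : ZMod 2, b = 0 ∨ b = 1 := by decide
  have hdiff : ∀ a b : ZMod 2, a ≠ b → a = 1 + b := by decide
  rcases h01 (v 0) with h0 | h0
  · have : i = i0 := by
      apply hb.1
      rw [hw0, ← h0, ← hv]
      exact (Fin.cons_self_tail v).symm
    rw [h0, zero_add, this]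
  · rw [h0]
    apply hdiff
    intro hlast
    have heq : window m s (i + 1) = window m s (i0 + 1) := by
      rw [← Fin.snoc_init_self (window m s (i + 1)), ← Fin.snoc_init_self (window m s (i0 + 1)),
        init_window_succ, init_window_succ, hlast, hw0, ← hv, Fin.tail_cons]
    have h1 : i = i0 := add_right_cancel (hb.1 heq)
    have h2 : v 0 = 0 := by rw [hv, h1, hw0]; rfl
    rw [h0] at h2
    exact absurd h2 (by decide)

theorem Generates.unique {m : ℕ} {g g' : (Fin m → ZMod 2) → ZMod 2}
    {s : ZMod (2 ^ (m + 1)) → ZMod 2} (hs : IsDeBruijn (m + 1) s) (h : Generates g s)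
    (h' : Generates g' s) : g = g' := by
  funext w
  obtain ⟨i, hi⟩ := (window_bijective hs).2 (Fin.cons (α := fun _ => ZMod 2) 0 w)
  have h1 := congrFun ((h i).symm.trans (h' i)) (Fin.last m)
  rw [hi] at h1
  simpa [shiftStep] using h1

theorem Generates.shift {m : ℕ} {g : (Fin m → ZMod 2) → ZMod 2}
    {s t : ZMod (2 ^ (m + 1)) → ZMod 2} (h : Generates g s) (k : ZMod (2 ^ (m + 1)))
    (hk : ∀ i, t i = s (i + k)) : Generates g t := by
  have hw : ∀ i, window m t i = window m s (i + k) := by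
    intro i
    funext j
    simp only [window, hk]
    congr 1
    ring
  intro i
  rw [hw, hw, ← h, add_right_comm]

theorem Generates.window_add {m : ℕ} {g : (Fin m → ZMod 2) → ZMod 2}
    {s : ZMod (2 ^ (m + 1)) → ZMod 2} (h : Generates g s) (i : ZMod (2 ^ (m + 1))) (k : ℕ) :
    window m s (i + k) = (shiftStep g ^ k) (window m s i) := by
  induction k with
  | zero => simp
  | succ k ih =>
    rw [pow_succ' (shiftStep g), Equiv.Perm.mul_apply, ← ih, ← h]
    congr 1
    push_cast
    ring

theorem Generates.isCycleOn {m : ℕ} {g : (Fin m → ZMod 2) → ZMod 2}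
    {s : ZMod (2 ^ (m + 1)) → ZMod 2} (hs : IsDeBruijn (m + 1) s) (h : Generates g s) :
    (shiftStep g).IsCycleOn ((Finset.univ : Finset (Fin (m + 1) → ZMod 2)) : Set _) := by
  refine ⟨by simp, fun a _ b _ => ?_⟩
  obtain ⟨i, rfl⟩ := (window_bijective hs).2 a
  obtain ⟨j, rfl⟩ := (window_bijective hs).2 b
  refine ⟨((j - i).val : ℕ), ?_⟩
  rw [zpow_natCast, ← h.window_add]
  simp

/-- After `k` steps the entry at position `i + k` has moved to position `i`. -/
theorem shiftStep_pow_apply {m : ℕ} (g : (Fin m → ZMod 2) → ZMod 2) (v : Fin (m + 1) → ZMod 2)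
    (k : ℕ) (i j : Fin (m + 1)) (h : i.val + k = j.val) : (shiftStep g ^ k) v i = v j := by
  induction k generalizing i with
  | zero => rw [show i = j from Fin.ext h]; rfl
  | succ k ih =>
    rw [pow_succ', Equiv.Perm.mul_apply]
    have hi : i.val < m := by omega
    obtain ⟨i', rfl⟩ : ∃ i' : Fin m, i = i'.castSucc := ⟨⟨i, hi⟩, rfl⟩
    simp only [shiftStep, Equiv.coe_fn_mk, Fin.snoc_castSucc, Fin.tail]
    apply ih
    simp at h ⊢
    omega

/-- The first coordinates along the orbit of the zero state of a single-cycle shift register form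
a de Bruijn sequence. -/
theorem exists_deBruijn {m : ℕ} {g : (Fin m → ZMod 2) → ZMod 2}
    (hg : (shiftStep g).IsCycleOn ((Finset.univ : Finset (Fin (m + 1) → ZMod 2)) : Set _)) :
    ∃ s, IsDeBruijn (m + 1) s ∧ Generates g s := by
  have hcard : (Finset.univ : Finset (Fin (m + 1) → ZMod 2)).card = 2 ^ (m + 1) := by
    simp [ZMod.card]
  have hmod : ∀ a b : ℕ, (shiftStep g ^ a) 0 = (shiftStep g ^ b) 0 ↔ a ≡ b [MOD 2 ^ (m + 1)] := by
    intro a b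
    rw [hg.pow_apply_eq_pow_apply (Finset.mem_univ 0), hcard]
  let f : ZMod (2 ^ (m + 1)) → (Fin (m + 1) → ZMod 2) := fun i => (shiftStep g ^ i.val) 0
  have hadd : ∀ i (k : ℕ), f (i + k) = (shiftStep g ^ k) (f i) := by
    intro i k
    simp only [f]
    rw [← Equiv.Perm.mul_apply, ← pow_add, hmod, ← ZMod.natCast_eq_natCast_iff]
    simp
    ring
  have hwin : window m (fun i => f i 0) = f := by
    funext i j
    simp only [window]
    rw [hadd]
    exact shiftStep_pow_apply g (f i) j 0 j (by simp)
  refine ⟨fun i => f i 0, ?_, ?_⟩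
  · change Function.Injective (window m (fun i => f i 0))
    rw [hwin]
    intro a b hab
    have := (hmod _ _).1 hab
    rw [← ZMod.natCast_eq_natCast_iff] at this
    simpa using this
  · intro i
    rw [hwin]
    simpa using hadd i 1

/-- Both sequences read off the same cycle, possibly from different starting points. -/
theorem Generates.shiftRel {m : ℕ} {g : (Fin m → ZMod 2) → ZMod 2}
    {s t : {s : ZMod (2 ^ (m + 1)) → ZMod 2 // IsDeBruijn (m + 1) s}} (hs : Generates g s.1)
    (ht : Generates g t.1) : shiftRel (m + 1) s t := by
  obtain ⟨k, hk⟩ := (window_bijective s.2).2 (window m t.1 0)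
  refine ⟨k, fun i => ?_⟩
  have h1 := ht.window_add 0 i.val
  rw [← hk, ← hs.window_add] at h1
  have h2 := congrFun h1 0
  simpa [window, add_comm] using h2

theorem stmt0 (n : ℕ) (hn : 1 ≤ n) :
    Nat.card (Quot (shiftRel n)) = 2 ^ (2 ^ (n - 1) - n) := by
  obtain ⟨m, rfl⟩ : ∃ m, n = m + 1 := ⟨n - 1, by omega⟩
  rw [Nat.add_sub_cancel, ← card_isCycleOn_shiftStep m]
  choose G hG using fun s : {s : ZMod (2 ^ (m + 1)) → ZMod 2 // IsDeBruijn (m + 1) s} =>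
    exists_generates s.2
  refine Nat.card_congr (Equiv.ofBijective
    (Quot.lift (fun s => ⟨G s, (hG s).isCycleOn s.2⟩) ?_) ⟨?_, ?_⟩)
  · rintro s t ⟨k, hk⟩
    exact Subtype.ext (((hG s).shift k hk).unique t.2 (hG t))
  · rintro ⟨s⟩ ⟨t⟩ hst
    have h1 : G s = G t := congrArg Subtype.val hst
    have h2 := hG t
    rw [← h1] at h2
    exact Quot.sound ((hG s).shiftRel h2)
  · rintro ⟨g, hg⟩
    obtain ⟨s, hs, hgs⟩ := exists_deBruijn hg
    exact ⟨Quot.mk _ ⟨s, hs⟩, Subtype.ext ((hG ⟨s, hs⟩).unique hs hgs)⟩
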